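/- Let s₁,…,s_{n+1} > 0 with ∑ s_i = n and p₁,…,p_{n+1} ∈ (1,∞) with ∑ 1/p_i = 1, and set w_i(t) = t^{1−s_i−1/p_i}. Then ∏_{i=1}^{n+1} w_i(t) = 1 for all t > 0, and consequently for smooth extensions U¹,…,Uⁿ,Φ of u¹,…,uⁿ,φ ∈ C_c^∞(ℝⁿ), |∫_{ℝⁿ} det(∇_x u¹,…,∇_x uⁿ) φ dx| ≤ ∏_{i=1}^n ‖t^{1−s_i−1/p_i} ∇_{x,t}U^i‖_{L^{p_i}(ℝ^{n+1}_+)} · ‖t^{1−s_{n+1}−1/p_{n+1}} ∇_{x,t}Φ‖_{L^{p_{n+1}}(ℝ^{n+1}_+)}. -/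

import Mathlib

open MeasureTheory
open scoped ENNReal BigOperators

/-- The `j`-th coordinate direction in the upper half space model `ℝⁿ × ℝ`:
for `j < n` it is the `j`-th horizontal direction, for `j = n` the vertical (`t`) direction. -/
noncomputable def dir {n : ℕ} (j : Fin (n + 1)) : EuclideanSpace ℝ (Fin n) × ℝ :=
  if h : (j : ℕ) < n then (EuclideanSpace.single ⟨j, h⟩ 1, 0) else (0, 1)

/-- The `(n+1)×(n+1)` matrix whose `i`-th row is the full gradient `∇_{x,t} V^i`. -/
noncomputable def bulkMatrix {n : ℕ}
    (V : Fin (n + 1) → (EuclideanSpace ℝ (Fin n) × ℝ → ℝ))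
    (p : EuclideanSpace ℝ (Fin n) × ℝ) : Matrix (Fin (n + 1)) (Fin (n + 1)) ℝ :=
  Matrix.of fun i j => fderiv ℝ (V i) p (dir j)

/-- The `n×n` matrix whose `i`-th row is the gradient `∇_x u^i`. -/
noncomputable def bdryMatrix {n : ℕ} (u : Fin n → (EuclideanSpace ℝ (Fin n) → ℝ))
    (x : EuclideanSpace ℝ (Fin n)) : Matrix (Fin n) (Fin n) ℝ :=
  Matrix.of fun i j => fderiv ℝ (u i) x (EuclideanSpace.single j 1)

/-- The open upper half space `ℝ^{n+1}_+ = ℝⁿ × (0,∞)`. -/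
def upperHalf (n : ℕ) : Set (EuclideanSpace ℝ (Fin n) × ℝ) := {p | 0 < p.2}

/-!
The divergence theorem turns the boundary integral of `φ det(∇u¹, …, ∇uⁿ)` into the integral of the
full Jacobian `det(∇U¹, …, ∇Uⁿ, ∇Φ)` over the half space: expanded along the row `∇Φ`, this
determinant is the divergence of `Φ` times a column of cofactors, because such columns are
divergence free (the Piola identity), and the vertical cofactor restricts to `det(∇u¹, …, ∇uⁿ)` on
the boundary. Hadamard's inequality bounds the determinant by the product of the gradient norms.
The exponents of the weights sum to `(n + 1) - n - 1 = 0`, so the weights can be inserted for free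
before applying Hölder's inequality.
-/

section Determinant

variable {ι : Type*} [Fintype ι] [DecidableEq ι]

section CommRing

variable {R : Type*} [CommRing R]

lemma det_updateRow_updateRow_swap (A : Matrix ι ι R) {i k : ι} (hik : i ≠ k) (x y : ι → R) :
    ((A.updateRow k x).updateRow i y).det = -((A.updateRow k y).updateRow i x).det := by
  have vanish (z : ι → R) : ((A.updateRow k z).updateRow i z).det = 0 :=
    Matrix.det_zero_of_row_eq hik (by simp [Matrix.updateRow_ne hik.symm])
  have additive (x₁ x₂ z : ι → R) : ((A.updateRow k (x₁ + x₂)).updateRow i z).det =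
      ((A.updateRow k x₁).updateRow i z).det + ((A.updateRow k x₂).updateRow i z).det := by
    simp only [A.updateRow_comm hik.symm, Matrix.det_updateRow_add]
  have polarized := vanish (x + y)
  rw [Matrix.det_updateRow_add, additive, additive, vanish, vanish] at polarized
  linear_combination polarized

lemma det_updateRow_eq_sum_mul_adjugate (A : Matrix ι ι R) (i : ι) (b : ι → R) :
    (A.updateRow i b).det = ∑ l, b l * A.adjugate l i := by
  rw [← Matrix.cramer_transpose_apply, Matrix.cramer_eq_adjugate_mulVec,
    ← Matrix.adjugate_transpose]
  simp only [Matrix.mulVec, dotProduct, Matrix.transpose_apply, mul_comm]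

lemma sum_det_updateRow_single_updateRow_eq_zero (A : Matrix ι ι R) {i k : ι} (hik : i ≠ k)
    {H : Matrix ι ι R} (hH : H.IsSymm) :
    ∑ j, ((A.updateRow k (Pi.single j 1)).updateRow i (H j)).det = 0 := by
  have adjugate_swap (j l : ι) : (A.updateRow k (Pi.single j 1)).adjugate l i =
      -(A.updateRow k (Pi.single l 1)).adjugate j i := by
    simp only [Matrix.adjugate_apply]
    exact det_updateRow_updateRow_swap A hik _ _
  have adjugate_diag (j : ι) : (A.updateRow k (Pi.single j 1)).adjugate j i = 0 := by
    rw [Matrix.adjugate_apply]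
    exact Matrix.det_zero_of_row_eq hik (by simp [Matrix.updateRow_ne hik.symm])
  simp only [det_updateRow_eq_sum_mul_adjugate, ← Finset.sum_product']
  refine Finset.sum_involution (fun jl _ => jl.swap) ?_ ?_ (by simp) (by simp)
  · rintro ⟨j, l⟩ -
    simp only [Prod.fst_swap, Prod.snd_swap]
    rw [adjugate_swap j l, hH.apply j l]
    ring
  · rintro ⟨j, l⟩ - hne heq
    obtain rfl : l = j := congrArg Prod.fst heq
    exact hne (by rw [adjugate_diag, mul_zero])

end CommRing

lemma abs_det_le_prod_norm_row (A : Matrix ι ι ℝ) : |A.det| ≤ ∏ i, ‖WithLp.toLp 2 (A i)‖ := by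
  let e := Fintype.equivFin ι
  have : Fact (Module.finrank ℝ (EuclideanSpace ℝ ι) = Fintype.card ι) := ⟨by simp⟩
  let b := (EuclideanSpace.basisFun ι ℝ).reindex e
  have volume_le :=
    b.toBasis.orientation.abs_volumeForm_apply_le fun i => WithLp.toLp 2 (A (e.symm i))
  have toMatrix_eq : b.toBasis.toMatrix (fun i => WithLp.toLp 2 (A (e.symm i))) =
      (A.submatrix e.symm e.symm).transpose := by
    ext i j
    simp [b, Module.Basis.toMatrix_apply]
  rwa [Orientation.volumeForm_robust' _ b, Module.Basis.det_apply, toMatrix_eq,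
    Matrix.det_transpose, Matrix.det_submatrix_equiv_self,
    e.symm.prod_comp fun i => ‖WithLp.toLp 2 (A i)‖] at volume_le

section Derivative

variable {𝕜 E : Type*} [NontriviallyNormedField 𝕜] [NormedAddCommGroup E] [NormedSpace 𝕜 E]

lemma contDiff_det {m : WithTop ℕ∞} {A : E → Matrix ι ι 𝕜}
    (hA : ∀ i j, ContDiff 𝕜 m fun x => A x i j) : ContDiff 𝕜 m fun x => (A x).det := by
  simp only [Matrix.det_apply']
  exact ContDiff.sum fun σ _ => contDiff_const.mul (contDiff_prod fun i _ => hA _ _)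

lemma fderiv_det_apply {A : E → Matrix ι ι 𝕜} {q : E}
    (hA : ∀ i, DifferentiableAt 𝕜 (fun x => A x i) q) (v : E) :
    fderiv 𝕜 (fun x => (A x).det) q v =
      ∑ i, ((A q).updateRow i (fderiv 𝕜 (fun x => A x i) q v)).det := by
  let D : ContinuousMultilinearMap 𝕜 (fun _ : ι => ι → 𝕜) 𝕜 :=
    ⟨(Matrix.detRowAlternating (n := ι) (R := 𝕜)).toMultilinearMap,
      Continuous.matrix_det (A := fun M : Matrix ι ι 𝕜 => M) continuous_id⟩
  have hD : HasFDerivAt (fun x => (A x).det) _ q :=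
    HasFDerivAt.multilinear_comp (f := D) fun i => (hA i).hasFDerivAt
  rw [hD.fderiv, sum_apply]
  rfl

end Derivative

end Determinant

section Jacobian

variable {ι E : Type*} [NormedAddCommGroup E] [NormedSpace ℝ E]

/-- The matrix of directional derivatives `∂V i / ∂(d j)`, for which the divergence structure of the
determinant is developed. `bulkMatrix` is the case of the coordinate directions `dir`; in general `d`
need not be a basis. -/
noncomputable def jacobianMatrix (V : ι → E → ℝ) (d : ι → E) (q : E) : Matrix ι ι ℝ :=
  Matrix.of fun i j => fderiv ℝ (V i) q (d j)

variable {V : ι → E → ℝ} {d : ι → E}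

lemma hasFDerivAt_jacobianMatrix_row {i : ι} {q : E} (hV : ContDiffAt ℝ 2 (V i) q) :
    HasFDerivAt (fun x => jacobianMatrix V d x i)
      (ContinuousLinearMap.pi fun l => (fderiv ℝ (fderiv ℝ (V i)) q).flip (d l)) q := by
  have hdiff : DifferentiableAt ℝ (fderiv ℝ (V i)) q :=
    (hV.fderiv_right (m := 1) (by norm_num)).differentiableAt one_ne_zero
  refine hasFDerivAt_pi.2 fun l => ?_
  simpa [jacobianMatrix] using hdiff.hasFDerivAt.clm_apply (hasFDerivAt_const (d l) q)

variable [Fintype ι]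

lemma norm_toLp_apply_le_opNorm (hd : ∀ a : EuclideanSpace ℝ ι, ‖∑ i, a i • d i‖ ≤ ‖a‖)
    (L : E →L[ℝ] ℝ) : ‖WithLp.toLp 2 fun i => L (d i)‖ ≤ ‖L‖ := by
  set a : EuclideanSpace ℝ ι := WithLp.toLp 2 fun i => L (d i) with ha
  obtain h0 | hpos := (norm_nonneg a).eq_or_lt
  · exact h0 ▸ norm_nonneg L
  refine le_of_mul_le_mul_right ?_ hpos
  calc ‖a‖ * ‖a‖ = L (∑ i, a i • d i) := by
        rw [← sq, EuclideanSpace.real_norm_sq_eq]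
        simp [ha, sq]
    _ ≤ ‖L‖ * ‖∑ i, a i • d i‖ := (le_abs_self _).trans (L.le_opNorm _)
    _ ≤ ‖L‖ * ‖a‖ := by gcongr; exact hd a

variable [DecidableEq ι] {k : ι}

lemma contDiff_adjugate_jacobianMatrix (hV : ∀ i ≠ k, ContDiff ℝ 2 (V i)) (j : ι) :
    ContDiff ℝ 1 fun x => (jacobianMatrix V d x).adjugate j k := by
  simp only [Matrix.adjugate_apply]
  refine contDiff_det fun i l => ?_
  obtain rfl | hik := eq_or_ne i k
  · simp only [Matrix.updateRow_self]
    exact contDiff_const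
  · simp only [Matrix.updateRow_ne hik]
    exact ((hV i hik).fderiv_right (by norm_num)).clm_apply contDiff_const

-- Expanding each minor by rows, every term contracts a symmetric second derivative with an
-- expression that is alternating in the same two indices.
lemma sum_fderiv_adjugate_jacobianMatrix_eq_zero {q : E} (hV : ∀ i ≠ k, ContDiffAt ℝ 2 (V i) q) :
    ∑ j, fderiv ℝ (fun x => (jacobianMatrix V d x).adjugate j k) q (d j) = 0 := by
  have hrow (j i : ι) : HasFDerivAt (fun x => (jacobianMatrix V d x).updateRow k (Pi.single j 1) i)
      (if i = k then 0 else
        ContinuousLinearMap.pi fun l => (fderiv ℝ (fderiv ℝ (V i)) q).flip (d l)) q := by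
    obtain rfl | hik := eq_or_ne i k
    · simpa only [if_true, Matrix.updateRow_self] using
        hasFDerivAt_const (𝕜 := ℝ) (Pi.single j 1 : ι → ℝ) q
    · simpa only [if_neg hik, Matrix.updateRow_ne hik] using
        hasFDerivAt_jacobianMatrix_row (hV i hik)
  have hsymm (i : ι) (hik : i ≠ k) :
      (Matrix.of fun j l => fderiv ℝ (fderiv ℝ (V i)) q (d j) (d l)).IsSymm :=
    Matrix.IsSymm.ext fun j l => (hV i hik).isSymmSndFDerivAt (by simp) _ _
  simp only [Matrix.adjugate_apply, fderiv_det_apply fun i => (hrow _ i).differentiableAt,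
    (hrow _ _).fderiv]
  rw [Finset.sum_comm]
  refine Finset.sum_eq_zero fun i _ => ?_
  obtain rfl | hik := eq_or_ne i k
  · exact Finset.sum_eq_zero fun j _ => Matrix.det_eq_zero_of_row_eq_zero i fun l => by simp
  · simp only [if_neg hik]
    exact sum_det_updateRow_single_updateRow_eq_zero _ hik (hsymm i hik)

lemma det_jacobianMatrix_eq_sum_fderiv (hVk : ContDiff ℝ 1 (V k))
    (hV : ∀ i ≠ k, ContDiff ℝ 2 (V i)) (q : E) :
    (jacobianMatrix V d q).det =
      ∑ j, fderiv ℝ (fun x => V k x * (jacobianMatrix V d x).adjugate j k) q (d j) := by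
  have leibniz (j : ι) :
      fderiv ℝ (fun x => V k x * (jacobianMatrix V d x).adjugate j k) q (d j) =
        V k q * fderiv ℝ (fun x => (jacobianMatrix V d x).adjugate j k) q (d j) +
          jacobianMatrix V d q k j * (jacobianMatrix V d q).adjugate j k := by
    rw [fderiv_fun_mul (hVk.differentiable one_ne_zero q)
      ((contDiff_adjugate_jacobianMatrix hV j).differentiable one_ne_zero q)]
    simp [jacobianMatrix, mul_comm]
  simp only [leibniz, Finset.sum_add_distrib, ← Finset.mul_sum,
    sum_fderiv_adjugate_jacobianMatrix_eq_zero fun i hi => (hV i hi).contDiffAt, mul_zero, zero_add]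
  exact Matrix.det_eq_sum_mul_adjugate_row _ k

lemma abs_det_jacobianMatrix_le (hd : ∀ a : EuclideanSpace ℝ ι, ‖∑ i, a i • d i‖ ≤ ‖a‖) (q : E) :
    |(jacobianMatrix V d q).det| ≤ ∏ i, ‖fderiv ℝ (V i) q‖ :=
  (abs_det_le_prod_norm_row _).trans <|
    Finset.prod_le_prod (fun _ _ => norm_nonneg _) fun _ _ => norm_toLp_apply_le_opNorm hd _

end Jacobian

section HalfSpace

lemma hasCompactSupport_comp_prodMk {X Y M : Type*} [TopologicalSpace X] [TopologicalSpace Y]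
    [T1Space Y] [Zero M] {f : X × Y → M} (hf : HasCompactSupport f) (y : Y) :
    HasCompactSupport fun x => f (x, y) :=
  hf.comp_isClosedEmbedding ⟨isEmbedding_prodMkLeft y, by
    rw [← Set.image_univ, ← Set.prod_singleton]
    exact isClosed_univ.prod isClosed_singleton⟩

lemma fderiv_comp_prodMk_apply {𝕜 E G F : Type*} [NontriviallyNormedField 𝕜]
    [NormedAddCommGroup E] [NormedSpace 𝕜 E] [NormedAddCommGroup G] [NormedSpace 𝕜 G]
    [NormedAddCommGroup F] [NormedSpace 𝕜 F] {f : E × G → F} {x : E} {t : G}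
    (hf : DifferentiableAt 𝕜 f (x, t)) (e : E) :
    fderiv 𝕜 (fun y => f (y, t)) x e = fderiv 𝕜 f (x, t) (e, 0) := by
  have hslice : HasFDerivAt (fun y => f (y, t)) _ x :=
    hf.hasFDerivAt.comp x (hasFDerivAt_prodMk_left x t)
  simp [hslice.fderiv]

variable {E F : Type*} [NormedAddCommGroup E] [NormedSpace ℝ E] [MeasurableSpace E]
  [NormedAddCommGroup F] [NormedSpace ℝ F]

lemma integrable_fderiv_apply [OpensMeasurableSpace E] {μ : Measure E}
    [IsFiniteMeasureOnCompacts μ] {g : E → F} (hg : ContDiff ℝ 1 g) (hg' : HasCompactSupport g)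
    (v : E) : Integrable (fun x => fderiv ℝ g x v) μ :=
  ((hg.continuous_fderiv one_ne_zero).clm_apply continuous_const).integrable_of_hasCompactSupport
    (hg'.fderiv_apply (𝕜 := ℝ) v)

variable [BorelSpace E] [FiniteDimensional ℝ E] {μ : Measure E} [μ.IsAddHaarMeasure]
  {f : E × ℝ → F}

lemma integral_fderiv_apply_eq_zero {g : E → F} (hg : ContDiff ℝ 1 g) (hg' : HasCompactSupport g)
    (v : E) : ∫ x, fderiv ℝ g x v ∂μ = 0 := by
  have parts := integral_smul_fderiv_eq_neg_fderiv_smul_of_integrable (μ := μ) (v := v)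
    (f := fun _ => (1 : ℝ)) (g := g) (by simp) (by simpa using integrable_fderiv_apply hg hg' v)
    (by simpa using hg.continuous.integrable_of_hasCompactSupport hg') (by simp)
    (fun x _ => hg.differentiable one_ne_zero x)
  simpa using parts

lemma integral_fderiv_apply_horizontal_eq_zero (hf : ContDiff ℝ 1 f) (hf' : HasCompactSupport f)
    (ν : Measure ℝ) [IsLocallyFiniteMeasure ν] (e : E) :
    ∫ q, fderiv ℝ f q (e, 0) ∂(μ.prod ν) = 0 := by
  rw [integral_prod_symm _ (integrable_fderiv_apply hf hf' _)]
  simp only [← fderiv_comp_prodMk_apply (hf.differentiable one_ne_zero _)]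
  exact integral_eq_zero_of_ae <| .of_forall fun t => integral_fderiv_apply_eq_zero
    (hf.comp (contDiff_prodMk_left t)) (hasCompactSupport_comp_prodMk hf' t) e

lemma integral_fderiv_apply_vertical_eq_neg [CompleteSpace F] (hf : ContDiff ℝ 1 f)
    (hf' : HasCompactSupport f) (a : ℝ) :
    ∫ q, fderiv ℝ f q (0, 1) ∂(μ.prod (volume.restrict (Set.Ioi a))) = -∫ x, f (x, a) ∂μ := by
  have fderiv_slice (x : E) (t : ℝ) :
      fderiv ℝ f (x, t) (0, 1) = deriv (fun r => f (x, r)) t := by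
    have hslice : HasFDerivAt (fun r => f (x, r)) _ t :=
      (hf.differentiable one_ne_zero (x, t)).hasFDerivAt.comp t (hasFDerivAt_prodMk_right x t)
    simp [← fderiv_apply_one_eq_deriv, hslice.fderiv]
  rw [integral_prod _ (integrable_fderiv_apply hf hf' _), ← integral_neg]
  simp only [fderiv_slice]
  congr 1 with x
  exact HasCompactSupport.integral_Ioi_deriv_eq (hf.comp (contDiff_prodMk_right x))
    (hasCompactSupport_comp_prodMk (hf'.comp_homeomorph (Homeomorph.prodComm ℝ E)) x) a

lemma integral_fderiv_apply_prod_Ioi [CompleteSpace F] (hf : ContDiff ℝ 1 f)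
    (hf' : HasCompactSupport f) (a : ℝ) (v : E × ℝ) :
    ∫ q, fderiv ℝ f q v ∂(μ.prod (volume.restrict (Set.Ioi a))) =
      -(v.2 • ∫ x, f (x, a) ∂μ) := by
  have split (q : E × ℝ) :
      fderiv ℝ f q v = fderiv ℝ f q (v.1, 0) + v.2 • fderiv ℝ f q (0, 1) := by
    rw [← map_smul, ← map_add]
    simp
  have integrable (e : E × ℝ) := integrable_fderiv_apply
    (μ := μ.prod (volume.restrict (Set.Ioi a))) hf hf' e
  simp only [split]
  rw [integral_add (integrable _) ((integrable _).fun_smul _),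
    integral_fderiv_apply_horizontal_eq_zero hf hf', integral_smul,
    integral_fderiv_apply_vertical_eq_neg hf hf', zero_add, smul_neg]

lemma integral_det_jacobianMatrix_prod_Ioi {ι : Type*} [Fintype ι] [DecidableEq ι]
    {V : ι → E × ℝ → ℝ} {d : ι → E × ℝ} {k : ι} (hVk : ContDiff ℝ 1 (V k))
    (hVk' : HasCompactSupport (V k)) (hV : ∀ i ≠ k, ContDiff ℝ 2 (V i)) (a : ℝ) :
    ∫ q, (jacobianMatrix V d q).det ∂(μ.prod (volume.restrict (Set.Ioi a))) =
      -∑ j, (d j).2 * ∫ x, V k (x, a) * (jacobianMatrix V d (x, a)).adjugate j k ∂μ := by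
  have hsmooth (j : ι) :
      ContDiff ℝ 1 fun q => V k q * (jacobianMatrix V d q).adjugate j k :=
    hVk.mul (contDiff_adjugate_jacobianMatrix hV j)
  have hcompact (j : ι) :
      HasCompactSupport fun q => V k q * (jacobianMatrix V d q).adjugate j k :=
    hVk'.mul_right
  simp only [det_jacobianMatrix_eq_sum_fderiv hVk hV]
  rw [integral_finsetSum _ fun j _ => integrable_fderiv_apply (hsmooth j) (hcompact j) _]
  simp only [integral_fderiv_apply_prod_Ioi (hsmooth _) (hcompact _), smul_eq_mul,
    Finset.sum_neg_distrib]

end HalfSpace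

section Holder

variable {ι : Type*} [Fintype ι] {p : ι → ℝ}

lemma lintegral_prod_enorm_le_prod_eLpNorm {α F : Type*} [MeasurableSpace α] {μ : Measure α}
    [NormedAddCommGroup F] (hp : ∀ i, 0 < p i) (hp1 : ∑ i, 1 / p i = 1) {g : ι → α → F}
    (hg : ∀ i, AEStronglyMeasurable (g i) μ) :
    ∫⁻ x, ∏ i, ‖g i x‖ₑ ∂μ ≤ ∏ i, eLpNorm (g i) (ENNReal.ofReal (p i)) μ := by
  have rpow_rpow (i : ι) (x : α) : (‖g i x‖ₑ ^ p i) ^ (1 / p i) = ‖g i x‖ₑ := by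
    rw [one_div, ENNReal.rpow_rpow_inv (hp i).ne']
  have eLpNorm_eq (i : ι) : eLpNorm (g i) (ENNReal.ofReal (p i)) μ =
      (∫⁻ x, ‖g i x‖ₑ ^ p i ∂μ) ^ (1 / p i) := by
    rw [eLpNorm_eq_lintegral_rpow_enorm_toReal (by simpa using hp i) ENNReal.ofReal_ne_top,
      ENNReal.toReal_ofReal (hp i).le]
  have holder := ENNReal.lintegral_prod_norm_pow_le Finset.univ
    (fun i _ => (hg i).enorm.pow_const (p i)) hp1 fun i _ => (one_div_pos.2 (hp i)).le
  simpa only [rpow_rpow, eLpNorm_eq] using holder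

lemma enorm_integral_det_jacobianMatrix_le [DecidableEq ι] {E : Type*} [NormedAddCommGroup E]
    [NormedSpace ℝ E] [MeasurableSpace E] [OpensMeasurableSpace E] {μ : Measure E} {V : ι → E → ℝ}
    {d : ι → E} (hd : ∀ a : EuclideanSpace ℝ ι, ‖∑ i, a i • d i‖ ≤ ‖a‖) (hp : ∀ i, 0 < p i)
    (hp1 : ∑ i, 1 / p i = 1) {w : ι → E → ℝ} (hw : ∀ i, AEStronglyMeasurable (w i) μ)
    (hw1 : ∀ᵐ q ∂μ, ∏ i, w i q = 1) :
    ‖∫ q, (jacobianMatrix V d q).det ∂μ‖ₑ ≤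
      ∏ i, eLpNorm (fun q => w i q * ‖fderiv ℝ (V i) q‖) (ENNReal.ofReal (p i)) μ := by
  have pointwise {q : E} (hq : ∏ i, w i q = 1) :
      ‖(jacobianMatrix V d q).det‖ₑ ≤ ∏ i, ‖w i q * ‖fderiv ℝ (V i) q‖‖ₑ := by
    simp only [Real.enorm_eq_ofReal_abs]
    rw [← ENNReal.ofReal_prod_of_nonneg fun i _ => abs_nonneg _, ← Finset.abs_prod,
      Finset.prod_mul_distrib, hq, one_mul]
    exact ENNReal.ofReal_le_ofReal ((abs_det_jacobianMatrix_le hd q).trans (le_abs_self _))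
  calc ‖∫ q, (jacobianMatrix V d q).det ∂μ‖ₑ
      ≤ ∫⁻ q, ‖(jacobianMatrix V d q).det‖ₑ ∂μ := enorm_integral_le_lintegral_enorm _
    _ ≤ ∫⁻ q, ∏ i, ‖w i q * ‖fderiv ℝ (V i) q‖‖ₑ ∂μ :=
        lintegral_mono_ae (hw1.mono fun _ => pointwise)
    _ ≤ _ := lintegral_prod_enorm_le_prod_eLpNorm hp hp1 fun i =>
        (hw i).mul (measurable_fderiv ℝ (V i)).norm.aestronglyMeasurable

end Holder

section UpperHalf

variable {n : ℕ}

lemma dir_castSucc (j : Fin n) : dir j.castSucc = (EuclideanSpace.single j 1, 0) := by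
  simp [dir]

lemma dir_last : dir (Fin.last n) = (0, 1) := by
  simp [dir]

-- `EuclideanSpace ℝ (Fin n) × ℝ` carries the maximum of the two norms, so the operator norm of a
-- derivative is not the Euclidean norm of the gradient, but it dominates it.
lemma norm_sum_smul_dir_le (a : EuclideanSpace ℝ (Fin (n + 1))) : ‖∑ i, a i • dir i‖ ≤ ‖a‖ := by
  have sum_eq : ∑ i, a i • dir i =
      (WithLp.toLp 2 fun i : Fin n => a i.castSucc, a (Fin.last n)) := by
    simp only [Fin.sum_univ_castSucc, dir_castSucc, dir_last]
    ext l <;> simp [Prod.fst_sum, Prod.snd_sum, Pi.single_apply]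
  have norm_sq : ‖a‖ ^ 2 = ∑ i : Fin n, a i.castSucc ^ 2 + a (Fin.last n) ^ 2 := by
    rw [EuclideanSpace.real_norm_sq_eq, Fin.sum_univ_castSucc]
  rw [sum_eq, Prod.norm_def]
  refine max_le ((sq_le_sq₀ (norm_nonneg _) (norm_nonneg a)).1 ?_)
    ((sq_le_sq₀ (norm_nonneg _) (norm_nonneg a)).1 ?_)
  · rw [norm_sq, EuclideanSpace.real_norm_sq_eq]
    exact le_add_of_nonneg_right (sq_nonneg _)
  · rw [norm_sq, Real.norm_eq_abs, sq_abs]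
    exact le_add_of_nonneg_left (Finset.sum_nonneg fun i _ => sq_nonneg _)

lemma volume_restrict_upperHalf :
    (volume.restrict (upperHalf n) : Measure (EuclideanSpace ℝ (Fin n) × ℝ)) =
      volume.prod (volume.restrict (Set.Ioi 0)) := by
  have : upperHalf n = Set.univ ×ˢ Set.Ioi 0 := by ext; simp [upperHalf]
  rw [this, Measure.volume_eq_prod, ← Measure.prod_restrict, Measure.restrict_univ]

lemma adjugate_jacobianMatrix_dir_last {V : Fin (n + 1) → EuclideanSpace ℝ (Fin n) × ℝ → ℝ}
    {x : EuclideanSpace ℝ (Fin n)} {a : ℝ}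
    (hV : ∀ i : Fin n, DifferentiableAt ℝ (V i.castSucc) (x, a)) :
    (jacobianMatrix V dir (x, a)).adjugate (Fin.last n) (Fin.last n) =
      (bdryMatrix (fun i y => V i.castSucc (y, a)) x).det := by
  rw [Matrix.adjugate_fin_succ_eq_det_submatrix, Even.neg_one_pow ⟨_, rfl⟩, one_mul]
  congr 1
  ext i j
  simp [jacobianMatrix, bdryMatrix, dir_castSucc, fderiv_comp_prodMk_apply (hV i)]

lemma integral_det_jacobianMatrix_upperHalf
    {V : Fin (n + 1) → EuclideanSpace ℝ (Fin n) × ℝ → ℝ}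
    (hV : ∀ i : Fin n, ContDiff ℝ 2 (V i.castSucc))
    (hlast : ContDiff ℝ 1 (V (Fin.last n))) (hlast' : HasCompactSupport (V (Fin.last n))) :
    ∫ q in upperHalf n, (jacobianMatrix V dir q).det =
      -∫ x, V (Fin.last n) (x, 0) * (bdryMatrix (fun i y => V i.castSucc (y, 0)) x).det := by
  have hV' (i : Fin (n + 1)) (hi : i ≠ Fin.last n) : ContDiff ℝ 2 (V i) := by
    obtain ⟨i, rfl⟩ := Fin.exists_castSucc_eq.2 hi
    exact hV i
  rw [volume_restrict_upperHalf, integral_det_jacobianMatrix_prod_Ioi hlast hlast' hV',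
    Fin.sum_univ_castSucc]
  simp [dir_castSucc, dir_last,
    adjugate_jacobianMatrix_dir_last fun i => (hV i).differentiable two_ne_zero _]

end UpperHalf

lemma sum_weight_exponent_eq_zero {n : ℕ} {s p : Fin (n + 1) → ℝ} (hsn : ∑ i, s i = n)
    (hp1 : ∑ i, 1 / p i = 1) : ∑ i, (1 - s i - 1 / p i) = 0 := by
  rw [Finset.sum_sub_distrib, Finset.sum_sub_distrib, hsn, hp1]
  simp

theorem stmt11_general {n : ℕ} (u : Fin n → EuclideanSpace ℝ (Fin n) → ℝ)
    (φ : EuclideanSpace ℝ (Fin n) → ℝ)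
    (U : Fin n → EuclideanSpace ℝ (Fin n) × ℝ → ℝ)
    (Φ : EuclideanSpace ℝ (Fin n) × ℝ → ℝ)
    (s : Fin (n + 1) → ℝ) (hsn : ∑ i, s i = n)
    (p : Fin (n + 1) → ℝ) (hp : ∀ i, 0 < p i) (hp1 : ∑ i, 1 / p i = 1)
    (hU : ∀ i, ContDiff ℝ 2 (U i)) (hΦ : ContDiff ℝ 1 Φ) (hΦ' : HasCompactSupport Φ)
    (hext : ∀ i x, U i (x, 0) = u i x) (hextφ : ∀ x, Φ (x, 0) = φ x) :
    (∀ t : ℝ, 0 < t → ∏ i : Fin (n + 1), t ^ (1 - s i - 1 / p i) = 1) ∧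
    ENNReal.ofReal |∫ x, (bdryMatrix u x).det * φ x| ≤
      (∏ i : Fin n,
        eLpNorm (fun q : EuclideanSpace ℝ (Fin n) × ℝ =>
            q.2 ^ (1 - s (Fin.castSucc i) - 1 / p (Fin.castSucc i)) * ‖fderiv ℝ (U i) q‖)
          (ENNReal.ofReal (p (Fin.castSucc i))) (volume.restrict (upperHalf n))) *
      eLpNorm (fun q : EuclideanSpace ℝ (Fin n) × ℝ =>
          q.2 ^ (1 - s (Fin.last n) - 1 / p (Fin.last n)) * ‖fderiv ℝ Φ q‖)
        (ENNReal.ofReal (p (Fin.last n))) (volume.restrict (upperHalf n)) := by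
  have hα := sum_weight_exponent_eq_zero hsn hp1
  have weights_one (t : ℝ) (ht : 0 < t) : ∏ i, t ^ (1 - s i - 1 / p i) = 1 := by
    rw [← Real.rpow_sum_of_pos ht, hα, Real.rpow_zero]
  refine ⟨weights_one, ?_⟩
  obtain rfl : (fun i x => U i (x, 0)) = u := funext₂ hext
  obtain rfl : (fun x => Φ (x, 0)) = φ := funext hextφ
  let V : Fin (n + 1) → EuclideanSpace ℝ (Fin n) × ℝ → ℝ := Fin.snoc U Φ
  have stokes := integral_det_jacobianMatrix_upperHalf (V := V) (by simpa [V] using hU)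
    (by simpa [V] using hΦ) (by simpa [V] using hΦ')
  have holder := enorm_integral_det_jacobianMatrix_le (V := V)
    (μ := volume.restrict (upperHalf n)) norm_sum_smul_dir_le hp hp1
    (w := fun i q => q.2 ^ (1 - s i - 1 / p i))
    (fun i => (measurable_snd.pow_const _).aestronglyMeasurable)
    (ae_restrict_of_forall_mem (measurableSet_lt measurable_const measurable_snd)
      fun q => weights_one q.2)
  rw [stokes, enorm_neg, Real.enorm_eq_ofReal_abs, Fin.prod_univ_castSucc] at holder
  simpa [V, mul_comm] using holder

/-- Weighted version: with `sᵢ > 0`, `∑ sᵢ = n`, `pᵢ ∈ (1,∞)`, `∑ 1/pᵢ = 1`, the weights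
`wᵢ(t) = t^{1-sᵢ-1/pᵢ}` multiply to `1` and consequently the weighted Hölder estimate for
the Jacobian holds. -/
theorem stmt11 {n : ℕ} (u : Fin n → EuclideanSpace ℝ (Fin n) → ℝ)
    (φ : EuclideanSpace ℝ (Fin n) → ℝ)
    (U : Fin n → EuclideanSpace ℝ (Fin n) × ℝ → ℝ)
    (Φ : EuclideanSpace ℝ (Fin n) × ℝ → ℝ)
    (s : Fin (n + 1) → ℝ) (hs : ∀ i, 0 < s i) (hsn : ∑ i, s i = n)
    (p : Fin (n + 1) → ℝ) (hp : ∀ i, 1 < p i) (hp1 : ∑ i, 1 / p i = 1)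
    (hu : ∀ i, ContDiff ℝ (⊤ : ℕ∞) (u i)) (hu' : ∀ i, HasCompactSupport (u i))
    (hφ : ContDiff ℝ (⊤ : ℕ∞) φ) (hφ' : HasCompactSupport φ)
    (hU : ∀ i, ContDiff ℝ (⊤ : ℕ∞) (U i)) (hU' : ∀ i, HasCompactSupport (U i))
    (hΦ : ContDiff ℝ (⊤ : ℕ∞) Φ) (hΦ' : HasCompactSupport Φ)
    (hext : ∀ i x, U i (x, 0) = u i x) (hextφ : ∀ x, Φ (x, 0) = φ x) :
    (∀ t : ℝ, 0 < t → ∏ i : Fin (n + 1), t ^ (1 - s i - 1 / p i) = 1) ∧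
    ENNReal.ofReal |∫ x, (bdryMatrix u x).det * φ x| ≤
      (∏ i : Fin n,
        eLpNorm (fun q : EuclideanSpace ℝ (Fin n) × ℝ =>
            q.2 ^ (1 - s (Fin.castSucc i) - 1 / p (Fin.castSucc i)) * ‖fderiv ℝ (U i) q‖)
          (ENNReal.ofReal (p (Fin.castSucc i))) (volume.restrict (upperHalf n))) *
      eLpNorm (fun q : EuclideanSpace ℝ (Fin n) × ℝ =>
          q.2 ^ (1 - s (Fin.last n) - 1 / p (Fin.last n)) * ‖fderiv ℝ Φ q‖)
        (ENNReal.ofReal (p (Fin.last n))) (volume.restrict (upperHalf n)) := by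
  exact stmt11_general u φ U Φ s hsn p (fun i => zero_lt_one.trans (hp i)) hp1
    (fun i => contDiff_infty.1 (hU i) 2) (contDiff_infty.1 hΦ 1) hΦ' hext hextφ
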